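/- Let α ≥ 1 be an ordinal and let d ≥ 1 be a natural number, and consider the ordinal space E = ω^α·d + 1, i.e., the set {β : β ≤ ω^α·d} of ordinals equipped with the order topology. Then the set of points of E whose orbit under the group of self-homeomorphisms of E is finite has exactly two elements if and only if d = 2. (In general, the points with finite orbit are exactly the d points ω^α·k for k = 1, …, d.) -/

import Mathlib

open Ordinal

/-!
Homeomorphisms preserve the iterated Cantor–Bendixson derivatives. The `γ`-th derivative of the
ordinals, for `γ ≠ 0`, consists of the nonzero multiples of `ω ^ γ`, so the points of rank exactly
`γ` are the `ω ^ γ * (δ + 1)`, together with `0` when `γ = 0`. Two points of the same rank are the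
maxima of disjoint clopen intervals of the same order type, and exchanging these intervals is a
homeomorphism; hence the orbits are exactly the sets of points of a given rank. In the segment up to
`ω ^ α * d` each rank `γ < α` occurs at the infinitely many points `ω ^ γ * (n + 1)`, whereas the
`α`-th derivative is the finite set of the `ω ^ α * k` with `1 ≤ k ≤ d`.
-/

section Homeomorphisms

open Order Set Filter Topology CantorBendixson

universe u

variable {X : Type u} [TopologicalSpace X]

/-- The orbit of `x` under the group of self-homeomorphisms of `X`. -/
def homeoOrbit (x : X) : Set X := {y | ∃ e : X ≃ₜ X, e x = y}

theorem mem_homeoOrbit_self (x : X) : x ∈ homeoOrbit x := ⟨Homeomorph.refl X, rfl⟩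

theorem mem_homeoOrbit_symm {x y : X} (h : y ∈ homeoOrbit x) : x ∈ homeoOrbit y := by
  obtain ⟨e, rfl⟩ := h
  exact ⟨e.symm, e.symm_apply_apply x⟩

theorem exists_homeomorph_eqOn_source {e : OpenPartialHomeomorph X X} (hs : IsClosed e.source)
    (ht : IsClosed e.target) (hd : Disjoint e.source e.target) :
    ∃ f : X ≃ₜ X, EqOn f e e.source := by
  classical
  let swap := e.disjointUnion e.symm hd hd.symm
  let fixed := OpenPartialHomeomorph.ofSet (e.source ∪ e.target)ᶜ (hs.union ht).isOpen_compl
  have htarget : swap.target = e.source ∪ e.target := union_comm _ _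
  let f := swap.disjointUnion fixed disjoint_compl_right (htarget ▸ disjoint_compl_right)
  have hfs : f.source = Set.univ := union_compl_self _
  have hft : f.target = Set.univ := (congrArg (· ∪ fixed.target) htarget).trans (union_compl_self _)
  refine ⟨f.toHomeomorphOfSourceEqUnivTargetEqUniv hfs hft, fun x hx ↦ ?_⟩
  calc f x = swap x := piecewise_eq_of_mem swap.source _ _ (mem_union_left _ hx)
    _ = e x := piecewise_eq_of_mem e.source _ _ hx

theorem apply_mem_homeoOrbit_apply {Y : Type*} [TopologicalSpace Y] {φ ψ : Y → X}
    (hφ : IsOpenEmbedding φ) (hψ : IsOpenEmbedding ψ) (hφc : IsClosed (range φ))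
    (hψc : IsClosed (range ψ)) (hd : Disjoint (range φ) (range ψ)) (y : Y) :
    ψ y ∈ homeoOrbit (φ y) := by
  have : Nonempty Y := ⟨y⟩
  let e := (hφ.toOpenPartialHomeomorph φ).symm.trans (hψ.toOpenPartialHomeomorph ψ)
  have hs : e.source = range φ := by simp [e]
  have ht : e.target = range ψ := by simp [e]
  obtain ⟨f, hf⟩ := exists_homeomorph_eqOn_source (e := e) (hs ▸ hφc) (ht ▸ hψc) (hs ▸ ht ▸ hd)
  refine ⟨f, (hf (hs ▸ mem_range_self y)).trans ?_⟩
  simp [e, hφ.toOpenPartialHomeomorph_left_inv]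

theorem preimage_iteratedDerivedSet {Y : Type u} [TopologicalSpace Y] {f : X → Y}
    (hf : IsOpenEmbedding f) (s : Set Y) (a : Ordinal.{u}) : f ⁻¹' sᵈ[a] = (f ⁻¹' s)ᵈ[a] := by
  induction a using Ordinal.limitRecOn with
  | zero => simp only [iteratedDerivedSet_zero]
  | add_one a ih =>
    rw [iteratedDerivedSet_succ, iteratedDerivedSet_succ, ← ih]
    ext x
    simp [← comap_principal, hf.accPt_comap_iff]
  | limit a ha ih =>
    rw [iteratedDerivedSet_limit ha, iteratedDerivedSet_limit ha, preimage_iInter]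
    exact iInter_congr fun b ↦ ih b b.2

theorem mem_iteratedDerivedSet_univ_of_mem_homeoOrbit {x y : X} {a : Ordinal.{u}}
    (hy : y ∈ homeoOrbit x) (hx : x ∈ Set.univᵈ[a]) : y ∈ Set.univᵈ[a] := by
  obtain ⟨e, rfl⟩ := hy
  rwa [← mem_preimage, preimage_iteratedDerivedSet e.isOpenEmbedding]

theorem exists_lt_mem_iteratedDerivedSet_sdiff {s : Set X} {x : X} {a : Ordinal.{u}} (hs : x ∈ s)
    (ha : x ∉ sᵈ[a]) : ∃ b < a, x ∈ sᵈ[b] \ sᵈ[b + 1] := by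
  induction a using Ordinal.limitRecOn with
  | zero => simp [hs] at ha
  | add_one a ih =>
    by_cases hxa : x ∈ sᵈ[a]
    · exact ⟨a, lt_add_one a, hxa, ha⟩
    · obtain ⟨b, hb, hxb⟩ := ih hxa
      exact ⟨b, hb.trans (lt_add_one a), hxb⟩
  | limit a hlim ih =>
    obtain ⟨c, hc, hxc⟩ : ∃ c < a, x ∉ sᵈ[c] := by
      simpa [iteratedDerivedSet_limit hlim] using ha
    obtain ⟨b, hb, hxb⟩ := ih c hc hxc
    exact ⟨b, hb.trans hc, hxb⟩

end Homeomorphisms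

section SuccessorOrders

open Order Set

variable {P : Type*} [LinearOrder P] [SuccOrder P] [NoMaxOrder P] [TopologicalSpace P]
  [OrderTopology P] {a : P}

theorem isOpen_Iic (b : P) : IsOpen (Iic b) := by
  rw [← Iio_succ]
  exact isOpen_Iio

theorem isClopen_Icc (ha : ¬ IsSuccLimit a) (b : P) : IsClopen (Icc a b) := by
  refine ⟨isClosed_Icc, ?_⟩
  rw [← Ici_inter_Iic, ← Ioi_insert, insert_eq]
  exact ((SuccOrder.isOpen_singleton_iff.2 ha).union isOpen_Ioi).inter (isOpen_Iic b)

end SuccessorOrders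

section OrdinalSpaces

open Order Set Filter Topology CantorBendixson

universe u

variable {a b c t α γ : Ordinal.{u}}

theorem accPt_principal_setOf_dvd_iff {x : Ordinal.{u}} (hb : b ≠ 0) :
    AccPt x (𝓟 {z | b ∣ z}) ↔ x ≠ 0 ∧ b * ω ∣ x := by
  rw [SuccOrder.accPt_principal, isMin_iff_eq_bot, bot_eq_zero]
  refine and_congr_right fun hx ↦ ⟨fun h ↦ ?_, ?_⟩
  · have mul_succ_lt {q : Ordinal} (hq : b * q < x) : b * succ q < x := by
      obtain ⟨_, ⟨c, rfl⟩, hqc, hcx⟩ := h _ hq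
      have : q < c := lt_of_mul_lt_mul_left hqc zero_le
      exact (mul_le_mul_right this.succ_le b).trans_lt hcx
    obtain ⟨q, rfl⟩ : b ∣ x := by
      refine ⟨x / b, ((mul_div_le x b).eq_of_not_lt fun hlt ↦ ?_).symm⟩
      exact (mul_succ_lt hlt).not_gt (lt_mul_succ_div x hb)
    have hq : IsSuccPrelimit q := isSuccPrelimit_iff_succ_lt.2 fun s hs ↦
      lt_of_mul_lt_mul_left (mul_succ_lt (mul_lt_mul_of_pos_left hs (pos_iff_ne_zero.2 hb))) zero_le
    exact mul_dvd_mul_left b (isSuccPrelimit_iff_omega0_dvd.1 hq)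
  · rintro ⟨c, rfl⟩ y hy
    rw [mul_assoc] at hx hy ⊢
    have hc : c ≠ 0 := right_ne_zero_of_mul (right_ne_zero_of_mul hx)
    have hlim : IsSuccLimit (ω * c) :=
      isSuccLimit_mul_left isSuccLimit_omega0 (pos_iff_ne_zero.2 hc)
    obtain ⟨q, hq, hyq⟩ := (lt_mul_iff_of_isSuccLimit hlim).1 hy
    exact ⟨b * q, dvd_mul_right b q, hyq, mul_lt_mul_of_pos_left hq (pos_iff_ne_zero.2 hb)⟩

theorem opow_dvd_of_forall_lt {x : Ordinal.{u}} (ha : a ≠ 0) (hγ : IsSuccLimit γ)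
    (h : ∀ β < γ, a ^ β ∣ x) : a ^ γ ∣ x := by
  rw [dvd_iff_mod_eq_zero]
  by_contra hmod
  obtain ⟨β, hβ, hlt⟩ := (lt_opow_of_isSuccLimit ha hγ).1 (mod_lt x (opow_ne_zero γ ha))
  have hdvd : a ^ β ∣ x % a ^ γ := by
    refine (dvd_add_iff ((opow_dvd_opow a hβ.le).mul_right (x / a ^ γ))).1 ?_
    rw [div_add_mod]
    exact h β hβ
  exact (le_of_dvd hmod hdvd).not_gt hlt

-- Derived sets of a space in `Type u` are indexed by `Ordinal.{u}`, while `Ordinal.{u}` itself lies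
-- in `Type (u + 1)`: hence the lift. The point `0` is isolated but divisible by every `ω ^ γ`.
theorem mem_iteratedDerivedSet_univ_iff_opow_dvd {x : Ordinal.{u}} :
    x ∈ Set.univᵈ[lift.{u + 1} γ] ↔ ω ^ γ ∣ x ∧ (x = 0 → γ = 0) := by
  induction γ using Ordinal.limitRecOn generalizing x with
  | zero => simp
  | add_one γ ih =>
    have hacc : AccPt x (𝓟 Set.univᵈ[lift.{u + 1} γ]) ↔ AccPt x (𝓟 {z | ω ^ γ ∣ z}) := by
      simp only [SuccOrder.accPt_principal, Set.Nonempty, mem_inter_iff, ih, mem_ofPred_eq, mem_Ioo]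
      grind [not_lt_zero]
    have hdvd : ω ^ γ * ω ∣ x → ω ^ γ ∣ x := dvd_of_mul_right_dvd
    rw [lift_add, lift_one, iteratedDerivedSet_succ, relDerivedSet_apply, mem_inter_iff,
      mem_derivedSet, hacc, accPt_principal_setOf_dvd_iff (opow_ne_zero γ omega0_ne_zero), ih,
      opow_add, opow_one]
    have : γ + 1 ≠ 0 := by simp
    tauto
  | limit γ hγ ih =>
    rw [iteratedDerivedSet_limit (isSuccLimit_lift.2 hγ), mem_iInter]
    refine ⟨fun h ↦ ?_, ?_⟩
    · have hβ (β : Ordinal) (hβ : β < γ) := (ih β hβ).1 (h ⟨lift β, lift_lt.2 hβ⟩)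
      have one_lt : 1 < γ := one_lt_of_isSuccLimit hγ
      exact ⟨opow_dvd_of_forall_lt omega0_ne_zero hγ fun β hlt ↦ (hβ β hlt).1,
        fun hx ↦ (one_ne_zero ((hβ 1 one_lt).2 hx)).elim⟩
    · rintro ⟨hdvd, hzero⟩ ⟨_, hb⟩
      obtain ⟨β, hβ, rfl⟩ := lt_lift_iff.1 hb
      exact (ih β hβ).2 ⟨(opow_dvd_opow ω hβ.le).trans hdvd, fun hx ↦ (hγ.ne_bot (hzero hx)).elim⟩

theorem mem_iteratedDerivedSet_univ_Iic_iff {x : Iic t} :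
    x ∈ Set.univᵈ[lift.{u + 1} γ] ↔ ω ^ γ ∣ x.1 ∧ (x.1 = 0 → γ = 0) := by
  rw [← mem_iteratedDerivedSet_univ_iff_opow_dvd, ← mem_preimage (f := Subtype.val),
    preimage_iteratedDerivedSet (isOpen_Iic t).isOpenEmbedding_subtypeVal, preimage_univ]

theorem mem_iteratedDerivedSet_univ_Iic_sdiff_iff {x : Iic t} :
    x ∈ Set.univᵈ[lift.{u + 1} γ] \ Set.univᵈ[lift.{u + 1} γ + 1] ↔
      (x.1 = 0 ∧ γ = 0) ∨ ∃ δ, x.1 = ω ^ γ * succ δ := by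
  have hlift : lift.{u + 1} γ + 1 = lift.{u + 1} (γ + 1) := by rw [lift_add, lift_one]
  have hpos : ω ^ γ ≠ 0 := opow_ne_zero γ omega0_ne_zero
  rw [hlift, Set.mem_sdiff, mem_iteratedDerivedSet_univ_Iic_iff,
    mem_iteratedDerivedSet_univ_Iic_iff]
  by_cases hx : x.1 = 0
  · simp [hx]
  · have hsucc (q : Ordinal) : ¬ ω ∣ q ↔ q ∈ range succ := by
      rw [← isSuccPrelimit_iff_omega0_dvd, not_isSuccPrelimit_iff_mem_range_succ]
    simp only [hx, false_imp_iff, and_true, false_and, false_or]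
    refine ⟨?_, ?_⟩
    · rintro ⟨⟨q, hq⟩, hndvd⟩
      rw [hq, opow_add, opow_one, mul_dvd_mul_iff_left hpos, hsucc] at hndvd
      obtain ⟨δ, rfl⟩ := hndvd
      exact ⟨δ, hq⟩
    · rintro ⟨δ, hδ⟩
      rw [hδ, opow_add, opow_one, mul_dvd_mul_iff_left hpos, hsucc]
      exact ⟨dvd_mul_right _ _, mem_range_self δ⟩

/-- Left translation by `a`, which carries the clopen initial segment `[0, c]` of the ordinals onto
the interval `[a, a + c]` of `Iic t`. It is the chart used to exchange two such intervals. -/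
def translateIic (h : a + c ≤ t) (z : Iic c) : Iic t := ⟨a + z, (add_le_add_right z.2 a).trans h⟩

theorem range_translateIic (h : a + c ≤ t) :
    range (translateIic h) = Subtype.val ⁻¹' Icc a (a + c) := by
  ext y
  refine ⟨?_, fun hy ↦ ?_⟩
  · rintro ⟨z, rfl⟩
    exact ⟨le_self_add, add_le_add_right z.2 a⟩
  · exact ⟨⟨y - a, sub_le.2 hy.2⟩, Subtype.ext (Ordinal.add_sub_cancel_of_le hy.1)⟩

theorem isOpenEmbedding_translateIic (ha : ¬ IsSuccLimit a) (h : a + c ≤ t) :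
    IsOpenEmbedding (translateIic h) := by
  have hmono : StrictMono (translateIic h) := fun z w hzw ↦ add_lt_add_right (α := Ordinal) hzw a
  refine ⟨hmono.isEmbedding_of_ordConnected (range_translateIic h ▸ ?_), range_translateIic h ▸ ?_⟩
  · exact ordConnected_Icc.preimage_mono fun _ _ hzw ↦ hzw
  · exact (isClopen_Icc ha (a + c)).isOpen.preimage continuous_subtype_val

theorem isClosed_range_translateIic (h : a + c ≤ t) : IsClosed (range (translateIic h)) :=
  range_translateIic h ▸ isClosed_Icc.preimage continuous_subtype_val

theorem mem_homeoOrbit_of_eq_add {x y : Iic t} (ha : ¬ IsSuccLimit a) (hb : ¬ IsSuccLimit b)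
    (hx : x.1 = a + c) (hy : y.1 = b + c) (hxb : x.1 < b) : y ∈ homeoOrbit x := by
  have hac : a + c ≤ t := hx ▸ x.2
  have hbc : b + c ≤ t := hy ▸ y.2
  have hdisjoint : Disjoint (range (translateIic hac)) (range (translateIic hbc)) := by
    rw [range_translateIic, range_translateIic]
    refine Disjoint.preimage _ (disjoint_left.2 fun z hza hzb ↦ ?_)
    exact (hzb.1.trans hza.2).not_gt (hx ▸ hxb)
  have hxtop : translateIic hac ⊤ = x := Subtype.ext hx.symm
  have hytop : translateIic hbc ⊤ = y := Subtype.ext hy.symm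
  rw [← hxtop, ← hytop]
  exact apply_mem_homeoOrbit_apply (isOpenEmbedding_translateIic ha hac)
    (isOpenEmbedding_translateIic hb hbc) (isClosed_range_translateIic hac)
    (isClosed_range_translateIic hbc) hdisjoint ⊤

theorem mem_homeoOrbit_of_mem_iteratedDerivedSet_sdiff {x y : Iic t}
    (hx : x ∈ Set.univᵈ[lift.{u + 1} γ] \ Set.univᵈ[lift.{u + 1} γ + 1])
    (hy : y ∈ Set.univᵈ[lift.{u + 1} γ] \ Set.univᵈ[lift.{u + 1} γ + 1]) : y ∈ homeoOrbit x := by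
  wlog hxy : x < y generalizing x y
  · obtain rfl | hyx := (not_lt.1 hxy).eq_or_lt
    · exact mem_homeoOrbit_self _
    · exact mem_homeoOrbit_symm (this hy hx hyx)
  have hxy' : x.1 < y.1 := hxy
  obtain ⟨ε, hyε⟩ : ∃ ε, y.1 = ω ^ γ * succ ε := by
    refine (mem_iteratedDerivedSet_univ_Iic_sdiff_iff.1 hy).resolve_left fun h ↦ ?_
    exact not_lt_zero (h.1 ▸ hxy')
  obtain ⟨hx0, rfl⟩ | ⟨δ, hxδ⟩ := mem_iteratedDerivedSet_univ_Iic_sdiff_iff.1 hx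
  · refine mem_homeoOrbit_of_eq_add (a := 0) (c := 0) (by simp) (not_isSuccLimit_succ ε)
      (by simpa using hx0) (by simpa using hyε) ?_
    simp [hx0]
  · obtain ⟨c, hc⟩ : ∃ c, ω ^ γ = 1 + c :=
      exists_add_of_le (one_le_iff_ne_zero.2 (opow_ne_zero γ omega0_ne_zero))
    have hδε : succ δ ≤ ε := by
      rw [hxδ, hyε] at hxy'
      exact succ_le_of_lt (succ_lt_succ_iff.1 (lt_of_mul_lt_mul_left hxy' zero_le))
    refine mem_homeoOrbit_of_eq_add (c := c) (not_isSuccLimit_succ (ω ^ γ * δ))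
      (not_isSuccLimit_succ (ω ^ γ * ε)) ?_ ?_ ?_
    · rw [hxδ, mul_succ, succ_eq_add_one, add_assoc, ← hc]
    · rw [hyε, mul_succ, succ_eq_add_one, add_assoc, ← hc]
    · exact lt_succ_of_le (hxδ.trans_le (mul_le_mul_right hδε _))

theorem iteratedDerivedSet_univ_Iic_sdiff_infinite (ht : ω ^ (γ + 1) ≤ t) :
    (Set.univᵈ[lift.{u + 1} γ] \ Set.univᵈ[lift.{u + 1} γ + 1] : Set (Iic t)).Infinite := by
  have hle (n : ℕ) : ω ^ γ * succ n ≤ t := by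
    refine le_trans ?_ ht
    rw [opow_add, opow_one]
    exact mul_le_mul_right (succ_le_of_lt (natCast_lt_omega0 n)) _
  refine Set.infinite_of_injective_forall_mem (f := fun n : ℕ ↦ (⟨ω ^ γ * succ n, hle n⟩ : Iic t))
    (fun m n h ↦ ?_) fun n ↦ mem_iteratedDerivedSet_univ_Iic_sdiff_iff.2 (.inr ⟨n, rfl⟩)
  have := mul_left_cancel₀ (opow_ne_zero γ omega0_ne_zero) (congrArg Subtype.val h)
  exact Nat.cast_injective (succ_injective this)

theorem finite_homeoOrbit_iff_mem_iteratedDerivedSet (ht : ω ^ α ≤ t)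
    (hα : (Set.univᵈ[lift.{u + 1} α] : Set (Iic t)).Finite) {x : Iic t} :
    (homeoOrbit x).Finite ↔ x ∈ Set.univᵈ[lift.{u + 1} α] := by
  refine ⟨fun hfin ↦ ?_, fun hx ↦
    hα.subset fun y hy ↦ mem_iteratedDerivedSet_univ_of_mem_homeoOrbit hy hx⟩
  by_contra hx
  obtain ⟨_, hb, hxb⟩ := exists_lt_mem_iteratedDerivedSet_sdiff (mem_univ x) hx
  obtain ⟨γ, hγ, rfl⟩ := lt_lift_iff.1 hb
  have hγt : ω ^ (γ + 1) ≤ t :=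
    (opow_le_opow_right omega0_pos (add_one_le_of_lt hγ)).trans ht
  exact iteratedDerivedSet_univ_Iic_sdiff_infinite hγt <|
    hfin.subset fun y hy ↦ mem_homeoOrbit_of_mem_iteratedDerivedSet_sdiff hxb hy

theorem iteratedDerivedSet_univ_Iic_eq {d : ℕ} (hα : α ≠ 0) (ht : t < ω ^ α * (d + 1)) :
    (Set.univᵈ[lift.{u + 1} α] : Set (Iic t)) =
      {x : Iic t | ∃ k : ℕ, 1 ≤ k ∧ k ≤ d ∧ (x : Ordinal) = ω ^ α * k} := by
  have hpos : ω ^ α ≠ 0 := opow_ne_zero α omega0_ne_zero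
  ext x
  simp only [mem_iteratedDerivedSet_univ_Iic_iff, hα, imp_false, mem_ofPred_eq]
  refine ⟨?_, ?_⟩
  · rintro ⟨⟨c, hc⟩, hx⟩
    have hcd : c < (d + 1 : ℕ) := by
      rw [Nat.cast_succ]
      exact lt_of_mul_lt_mul_left ((hc ▸ x.2 : ω ^ α * c ≤ t).trans_lt ht) zero_le
    obtain ⟨k, rfl⟩ := lt_omega0.1 (hcd.trans (natCast_lt_omega0 _))
    have hk : k ≠ 0 := by
      rintro rfl
      exact hx (by simpa using hc)
    exact ⟨k, Nat.one_le_iff_ne_zero.2 hk, Nat.lt_succ_iff.1 (Nat.cast_lt.1 hcd), hc⟩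
  · rintro ⟨k, hk, -, hx⟩
    rw [hx]
    exact ⟨dvd_mul_right _ _, mul_ne_zero hpos (Nat.cast_ne_zero.2 (Nat.one_le_iff_ne_zero.1 hk))⟩

theorem ncard_setOf_eq_mul_natCast {d : ℕ} (hb : b ≠ 0) (ht : b * d ≤ t) :
    {x : Iic t | ∃ k : ℕ, 1 ≤ k ∧ k ≤ d ∧ (x : Ordinal) = b * k}.ncard = d := by
  have himage : Subtype.val '' {x : Iic t | ∃ k : ℕ, 1 ≤ k ∧ k ≤ d ∧ (x : Ordinal) = b * k} =
      (fun k : ℕ ↦ b * k) '' Icc 1 d := by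
    ext y
    refine ⟨?_, ?_⟩
    · rintro ⟨x, ⟨k, hk, hkd, hx⟩, rfl⟩
      exact ⟨k, ⟨hk, hkd⟩, hx.symm⟩
    · rintro ⟨k, ⟨hk, hkd⟩, rfl⟩
      have hkt : b * k ≤ t := (mul_le_mul_right (Nat.cast_le.2 hkd) b).trans ht
      exact ⟨⟨b * k, hkt⟩, ⟨k, hk, hkd, rfl⟩, rfl⟩
  have hinj : Function.Injective fun k : ℕ ↦ b * k := fun _ _ h ↦
    Nat.cast_injective (mul_left_cancel₀ hb h)
  rw [← ncard_image_of_injective _ Subtype.val_injective, himage, ncard_image_of_injective _ hinj,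
    ncard_eq_toFinset_card', toFinset_Icc, Nat.card_Icc, Nat.add_sub_cancel]

theorem doubly_pointed_ordinal_space_iff_general {d : ℕ} (hα : 1 ≤ α) (hd : 1 ≤ d)
    (hdt : ω ^ α * d ≤ t) (htd : t < ω ^ α * (d + 1)) :
    ({x : Iic t | {y : Iic t | ∃ e : Iic t ≃ₜ Iic t, e x = y}.Finite}.ncard = 2 ↔ d = 2) ∧
      {x : Iic t | {y : Iic t | ∃ e : Iic t ≃ₜ Iic t, e x = y}.Finite} =
        {x : Iic t | ∃ k : ℕ, 1 ≤ k ∧ k ≤ d ∧ (x : Ordinal) = ω ^ α * k} := by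
  have hderived := iteratedDerivedSet_univ_Iic_eq (one_le_iff_ne_zero.1 hα) htd
  have hncard := ncard_setOf_eq_mul_natCast (opow_ne_zero α omega0_ne_zero) hdt
  have hfinite : (Set.univᵈ[lift.{u + 1} α] : Set (Iic t)).Finite :=
    finite_of_ncard_pos (by rwa [hderived, hncard])
  have hαt : ω ^ α ≤ t := (le_mul_of_one_le_right' (Nat.one_le_cast.2 hd)).trans hdt
  have heq : {x : Iic t | (homeoOrbit x).Finite} =
      {x : Iic t | ∃ k : ℕ, 1 ≤ k ∧ k ≤ d ∧ (x : Ordinal) = ω ^ α * k} := by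
    rw [← hderived]
    exact Set.ext fun x ↦ finite_homeoOrbit_iff_mem_iteratedDerivedSet hαt hfinite
  refine ⟨?_, heq⟩
  change {x : Iic t | (homeoOrbit x).Finite}.ncard = 2 ↔ d = 2
  rw [heq, hncard]

end OrdinalSpaces

/-- For an ordinal `α ≥ 1` and a natural number `d ≥ 1`, consider the
ordinal space `E = ω ^ α * d + 1` (the set of ordinals `β ≤ ω ^ α * d` with the order
topology).  The set of points of `E` whose orbit under the group of self-homeomorphisms
of `E` is finite has exactly two elements if and only if `d = 2`; in general, the points
with finite orbit are exactly the `d` points `ω ^ α * k` for `k = 1, …, d`. -/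
theorem doubly_pointed_ordinal_space_iff
    (α : Ordinal) (hα : 1 ≤ α) (d : ℕ) (hd : 1 ≤ d) :
    ({x : Set.Iic (omega0 ^ α * d) |
        {y : Set.Iic (omega0 ^ α * d) | ∃ e : Set.Iic (omega0 ^ α * d) ≃ₜ Set.Iic (omega0 ^ α * d),
          e x = y}.Finite}.ncard = 2 ↔ d = 2) ∧
      {x : Set.Iic (omega0 ^ α * d) |
        {y : Set.Iic (omega0 ^ α * d) | ∃ e : Set.Iic (omega0 ^ α * d) ≃ₜ Set.Iic (omega0 ^ α * d),
          e x = y}.Finite} =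
      {x : Set.Iic (omega0 ^ α * d) | ∃ k : ℕ, 1 ≤ k ∧ k ≤ d ∧ (x : Ordinal) = omega0 ^ α * k} :=
  doubly_pointed_ordinal_space_iff_general hα hd le_rfl <|
    mul_lt_mul_of_pos_left (lt_add_one (d : Ordinal)) (opow_pos α omega0_pos)
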